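/- arXiv:1404.0784 — 3 statements merged into one kernel-verified Lean document; each statement's English description precedes it below -/
import Mathlib

section
/- (Disjunctive normal form) For any type U, any k : ℕ, any k-ary 0-1 term function f on U, and any assignment x : Fin k → Set U, f(x) equals the union of the constituents C_σ(x) taken over all σ : Fin k → Bool such that f(σ*) ≠ ∅. -/
/-- The constituent `C_σ(x)`. -/
def constituent {U : Type*} {k : ℕ} (x : Fin k → Set U) (σ : Fin k → Bool) : Set U :=
  ⋂ i, if σ i = true then x i else (x i)ᶜ

/-- The 0-1 assignment `σ*` associated to a Boolean tuple `σ`. -/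
def starAssign {U : Type*} {k : ℕ} (σ : Fin k → Bool) : Fin k → Set U :=
  fun i => if σ i = true then Set.univ else ∅

/-- `k`-ary 0-1 term functions on `U` (only constants `∅` and `univ` allowed). -/
inductive IsTermFun01 (U : Type*) (k : ℕ) : ((Fin k → Set U) → Set U) → Prop
  | proj (i : Fin k) : IsTermFun01 U k (fun x => x i)
  | empty : IsTermFun01 U k (fun _ => ∅)
  | univ : IsTermFun01 U k (fun _ => Set.univ)
  | union {f g} : IsTermFun01 U k f → IsTermFun01 U k g → IsTermFun01 U k (fun x => f x ∪ g x)
  | inter {f g} : IsTermFun01 U k f → IsTermFun01 U k g → IsTermFun01 U k (fun x => f x ∩ g x)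
  | compl {f} : IsTermFun01 U k f → IsTermFun01 U k (fun x => (f x)ᶜ)

section

variable {U : Type*} {k : ℕ}

theorem mem_constituent {x : Fin k → Set U} {σ : Fin k → Bool} {u : U} :
    u ∈ constituent x σ ↔ ∀ i, u ∈ x i ↔ σ i = true := by
  rw [constituent, Set.mem_iInter]
  refine forall_congr' fun i => ?_
  cases σ i <;> simp

theorem iUnion_constituent (x : Fin k → Set U) : ⋃ σ, constituent x σ = Set.univ := by
  classical
  refine Set.iUnion_eq_univ_iff.mpr fun u => ⟨fun i => decide (u ∈ x i), ?_⟩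
  exact mem_constituent.mpr fun i => decide_eq_true_iff.symm

theorem mem_starAssign {σ : Fin k → Bool} {i : Fin k} {u : U} :
    u ∈ starAssign (U := U) σ i ↔ σ i = true := by
  rw [starAssign]
  cases σ i <;> simp

namespace IsTermFun01

variable {f : (Fin k → Set U) → Set U}

/-- Two distinct points are allowed because a point of `constituent x σ` has the same membership
pattern in `x` as every point of `U` has in `starAssign σ`. -/
theorem mem_iff_mem (hf : IsTermFun01 U k f) {x y : Fin k → Set U} {u v : U}
    (h : ∀ i, u ∈ x i ↔ v ∈ y i) : u ∈ f x ↔ v ∈ f y := by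
  induction hf with
  | proj i => exact h i
  | empty => exact Iff.rfl
  | univ => exact Iff.rfl
  | union _ _ ihf ihg => exact or_congr ihf ihg
  | inter _ _ ihf ihg => exact and_congr ihf ihg
  | compl _ ihf => exact not_congr ihf

theorem mem_iff_mem_starAssign (hf : IsTermFun01 U k f) {x : Fin k → Set U} {σ : Fin k → Bool}
    {u : U} (hu : u ∈ constituent x σ) (v : U) : u ∈ f x ↔ v ∈ f (starAssign σ) :=
  hf.mem_iff_mem fun i => (mem_constituent.mp hu i).trans mem_starAssign.symm

theorem mem_iff_starAssign_ne_empty (hf : IsTermFun01 U k f) {x : Fin k → Set U}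
    {σ : Fin k → Bool} {u : U} (hu : u ∈ constituent x σ) :
    u ∈ f x ↔ f (starAssign σ) ≠ ∅ := by
  rw [← Set.nonempty_iff_ne_empty]
  constructor
  · intro hux
    exact ⟨u, (hf.mem_iff_mem_starAssign hu u).mp hux⟩
  · rintro ⟨v, hv⟩
    exact (hf.mem_iff_mem_starAssign hu v).mpr hv

end IsTermFun01

end

theorem disjunctive_normal_form (U : Type*) (k : ℕ)
    (f : (Fin k → Set U) → Set U) (hf : IsTermFun01 U k f) (x : Fin k → Set U) :
    f x = ⋃ σ ∈ {σ : Fin k → Bool | f (starAssign σ) ≠ ∅}, constituent x σ := by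
  ext u
  simp only [Set.mem_iUnion₂, Set.mem_ofPred_eq, exists_prop]
  constructor
  · intro hu
    obtain ⟨σ, hσ⟩ := Set.iUnion_eq_univ_iff.mp (iUnion_constituent x) u
    exact ⟨σ, (hf.mem_iff_starAssign_ne_empty hσ).mp hu, hσ⟩
  · rintro ⟨σ, hne, hσ⟩
    exact (hf.mem_iff_starAssign_ne_empty hσ).mpr hne
end

section
/- For any k : ℕ and any S, T : Set (Fin k → Bool), the following are equivalent: (i) for every nonempty type U and every assignment x : Fin k → Set U, P_S(x) = P_T(x); (ii) S = T. That is, two terms define the same set function over all nonempty power-set algebras if and only if they have the same set of constituents. -/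
/-- The term function associated to a set `S` of constituent indices:
`P_S(x) = ⋃ σ ∈ S, C_σ(x)`. -/
def PSfun {U : Type*} {k : ℕ} (S : Set (Fin k → Bool)) (x : Fin k → Set U) : Set U :=
  ⋃ σ ∈ S, constituent x σ

/-! Each point of `U` lies in exactly one constituent of `x`, the one indexed by its vector of
membership truth values, so `P_S(x)` is the preimage of `S` under the map sending a point to this
vector. When the map is surjective, `S` can be recovered from `P_S(x)`; on the Boolean cube with
the sets `{τ | τ i = true}` it is the identity. -/

/-- The membership vector of a point `u` with respect to a family `x` of sets: its `i`-th entry is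
the truth value of `u ∈ x i`, so that it is the index of the constituent of `x` containing `u`. -/
noncomputable def membershipVector {ι U : Type*} (x : ι → Set U) (u : U) : ι → Bool :=
  fun i => (x i).boolIndicator u

/-- The coordinate family on the Boolean cube `ι → Bool`, whose `i`-th set is the face where the
`i`-th coordinate is `true`. It is the universal assignment: its constituents are the singletons. -/
def coordinateFamily (ι : Type*) (i : ι) : Set (ι → Bool) :=
  {τ | τ i = true}

theorem membershipVector_coordinateFamily (ι : Type*) :
    membershipVector (coordinateFamily ι) = id := by
  funext τ i
  exact Bool.eq_iff_iff.mpr (Set.mem_iff_boolIndicator (coordinateFamily ι i) τ).symm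

section TermFunction

variable {U : Type*} {k : ℕ} {x : Fin k → Set U}

theorem mem_constituent_iff {σ : Fin k → Bool} {u : U} :
    u ∈ constituent x σ ↔ membershipVector x u = σ := by
  have mem_literal_iff (i : Fin k) :
      (u ∈ if σ i = true then x i else (x i)ᶜ) ↔ membershipVector x u i = σ i := by
    cases σ i
    · simpa [membershipVector] using Set.notMem_iff_boolIndicator (x i) u
    · simpa [membershipVector] using Set.mem_iff_boolIndicator (x i) u
  simp only [constituent, Set.mem_iInter, mem_literal_iff, funext_iff]

theorem PSfun_eq_preimage (S : Set (Fin k → Bool)) (x : Fin k → Set U) :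
    PSfun S x = membershipVector x ⁻¹' S := by
  ext u
  simp only [PSfun, Set.mem_iUnion₂, mem_constituent_iff, exists_prop, exists_eq_right',
    Set.mem_preimage]

theorem PSfun_left_injective (hx : Function.Surjective (membershipVector x)) :
    Function.Injective fun S => PSfun S x := by
  simpa only [PSfun_eq_preimage] using hx.preimage_injective

end TermFunction

theorem same_function_iff_same_constituents (k : ℕ) (S T : Set (Fin k → Bool)) :
    (∀ (U : Type), Nonempty U → ∀ x : Fin k → Set U, PSfun S x = PSfun T x) ↔ S = T := by
  constructor
  · intro h
    have hsurj : Function.Surjective (membershipVector (coordinateFamily (Fin k))) := by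
      rw [membershipVector_coordinateFamily]
      exact Function.surjective_id
    exact PSfun_left_injective hsurj (h (Fin k → Bool) inferInstance (coordinateFamily (Fin k)))
  · rintro rfl U _ x
    rfl
end

section
/- (Schröder's elimination for one equation and one negated equation) For any type U and any sets a, b, c, d : Set U, there exists x : Set U with (a ∩ x) ∪ (b ∩ xᶜ) = ∅ and (c ∩ x) ∪ (d ∩ xᶜ) ≠ ∅ if and only if a ∩ b = ∅ and (c ∩ aᶜ) ∪ (d ∩ bᶜ) ≠ ∅. -/
/-!
The solutions of `(a ⊓ x) ⊔ (b ⊓ xᶜ) = ⊥` are cut out by the bounds `x ≤ aᶜ` and `xᶜ ≤ bᶜ`, so at a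
solution `(c ⊓ x) ⊔ (d ⊓ xᶜ)` lies below `(c ⊓ aᶜ) ⊔ (d ⊓ bᶜ)`. When `a` and `b` are disjoint, the
largest solution `aᶜ` attains the first term of this bound and the solution `b` the second; no
solution need attain both, but a join is nonzero as soon as one of its terms is. The two
bounds come from `x ≤ aᶜ ↔ Disjoint x a`, which also holds for the pseudocomplement of a Heyting
algebra.
-/

section HeytingAlgebra

variable {α : Type*} [HeytingAlgebra α] {a b x : α}

theorem inf_sup_inf_compl_eq_bot_iff : (a ⊓ x) ⊔ (b ⊓ xᶜ) = ⊥ ↔ x ≤ aᶜ ∧ xᶜ ≤ bᶜ := by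
  rw [sup_eq_bot_iff, ← disjoint_iff, ← disjoint_iff, le_compl_iff_disjoint_left,
    le_compl_iff_disjoint_left]

theorem disjoint_of_inf_sup_inf_compl_eq_bot (h : (a ⊓ x) ⊔ (b ⊓ xᶜ) = ⊥) : Disjoint a b := by
  obtain ⟨hxa, hxb⟩ := inf_sup_inf_compl_eq_bot_iff.mp h
  exact le_compl_iff_disjoint_right.mp ((le_compl_comm.mp hxa).trans hxb)

theorem inf_compl_sup_inf_compl_compl_eq_bot (h : Disjoint a b) :
    (a ⊓ aᶜ) ⊔ (b ⊓ aᶜᶜ) = ⊥ :=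
  inf_sup_inf_compl_eq_bot_iff.mpr ⟨le_rfl, compl_anti h.le_compl_left⟩

theorem inf_sup_inf_compl_self_eq_bot (h : Disjoint a b) : (a ⊓ b) ⊔ (b ⊓ bᶜ) = ⊥ :=
  inf_sup_inf_compl_eq_bot_iff.mpr ⟨h.le_compl_left, le_rfl⟩

theorem schroeder_elimination_one_one_general (a b c d : α) :
    (∃ x : α, (a ⊓ x) ⊔ (b ⊓ xᶜ) = ⊥ ∧ (c ⊓ x) ⊔ (d ⊓ xᶜ) ≠ ⊥) ↔
      a ⊓ b = ⊥ ∧ (c ⊓ aᶜ) ⊔ (d ⊓ bᶜ) ≠ ⊥ := by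
  constructor
  · rintro ⟨x, heq, hne⟩
    obtain ⟨hxa, hxb⟩ := inf_sup_inf_compl_eq_bot_iff.mp heq
    have hle : (c ⊓ x) ⊔ (d ⊓ xᶜ) ≤ (c ⊓ aᶜ) ⊔ (d ⊓ bᶜ) := by gcongr
    exact ⟨(disjoint_of_inf_sup_inf_compl_eq_bot heq).eq_bot, ne_bot_of_le_ne_bot hne hle⟩
  · rintro ⟨hab, hne⟩
    have hdisj : Disjoint a b := disjoint_iff.mpr hab
    by_cases hca : c ⊓ aᶜ = ⊥
    · have hdb : d ⊓ bᶜ ≠ ⊥ := fun hdb ↦ hne (sup_eq_bot_iff.mpr ⟨hca, hdb⟩)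
      exact ⟨b, inf_sup_inf_compl_self_eq_bot hdisj, ne_bot_of_le_ne_bot hdb le_sup_right⟩
    · exact ⟨aᶜ, inf_compl_sup_inf_compl_compl_eq_bot hdisj,
        ne_bot_of_le_ne_bot hca le_sup_left⟩

end HeytingAlgebra

theorem schroeder_elimination_one_one (U : Type*) (a b c d : Set U) :
    (∃ x : Set U, (a ∩ x) ∪ (b ∩ xᶜ) = ∅ ∧ (c ∩ x) ∪ (d ∩ xᶜ) ≠ ∅) ↔
    (a ∩ b = ∅ ∧ (c ∩ aᶜ) ∪ (d ∩ bᶜ) ≠ ∅) :=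
  schroeder_elimination_one_one_general a b c d
end
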